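/- Let G be a word hyperbolic group generated by a finite set 𝒢 closed under inversion, and let C₁ and C₂ be virtually cyclic subgroups of G whose intersection C₁ ∩ C₂ is finite. Then there is a constant K₂ > 0 such that for any c₁ ∈ C₁ there exists c₂ ∈ C₂ with l_𝒢(c₂) ≤ K₂ such that the element c₁c₂ is shortest (with respect to l_𝒢) in the coset c₁C₂. -/

import Mathlib

universe u v w

section Defs

variable {G : Type u} [Group G]

/-- A finite generating set closed under inversion. -/
def IsSymmGen (X : Set G) : Prop :=
  X.Finite ∧ (∀ x ∈ X, x⁻¹ ∈ X) ∧ Subgroup.closure X = ⊤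

/-- Word length of `g` with respect to `X`. -/
noncomputable def wordLength (X : Set G) (g : G) : ℕ :=
  sInf {n : ℕ | ∃ l : List G, l.length = n ∧ (∀ x ∈ l, x ∈ X) ∧ l.prod = g}

/-- Word metric. -/
noncomputable def wordDist (X : Set G) (g h : G) : ℕ :=
  wordLength X (g⁻¹ * h)

/-- Gromov product with respect to the word metric. -/
noncomputable def gromovProd (X : Set G) (x y w : G) : ℝ :=
  ((wordDist X x w : ℝ) + (wordDist X y w : ℝ) - (wordDist X x y : ℝ)) / 2

end Defs

/-- A group is word hyperbolic if for some finite symmetric generating set the Gromov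
product satisfies the hyperbolicity inequality. -/
def IsWordHyperbolic (G : Type u) [Group G] : Prop :=
  ∃ X : Set G, IsSymmGen X ∧ ∃ δ : ℝ, 0 ≤ δ ∧
    ∀ x y z w : G,
      gromovProd X x z w ≥ min (gromovProd X x y w) (gromovProd X y z w) - δ

/-- A subgroup is quasiconvex: it is finitely generated and word lengths distort linearly. -/
def IsQuasiconvex {G : Type u} [Group G] (A : Subgroup G) : Prop :=
  ∃ Y : Set ↥A, IsSymmGen Y ∧ ∃ X : Set G, IsSymmGen X ∧ ∃ c : ℝ, 0 < c ∧
    ∀ a : ↥A, (wordLength Y a : ℝ) ≤ c * (wordLength X (a : G) : ℝ) + c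

/-- Property (Q): every finitely generated subgroup is quasiconvex. -/
def HasPropertyQ (G : Type u) [Group G] : Prop :=
  ∀ H : Subgroup G, H.FG → IsQuasiconvex H

/-- A group is virtually cyclic if it has a cyclic subgroup of finite index. -/
def IsVirtuallyCyclic (C : Type u) [Group C] : Prop :=
  ∃ Z : Subgroup C, IsCyclic ↥Z ∧ Z.FiniteIndex

/-- `G` is the amalgamated free product of its subgroups `A` and `B` along `C`:
`C = A ⊓ B`, `A ⊔ B = ⊤` and `G` has the pushout universal property. -/
structure IsAmalgamatedFreeProduct {G : Type u} [Group G] (A B C : Subgroup G) : Prop where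
  le_left : C ≤ A
  le_right : C ≤ B
  inf_eq : A ⊓ B = C
  sup_eq_top : A ⊔ B = ⊤
  univ : ∀ (K : Type u) [Group K] (f : ↥A →* K) (g : ↥B →* K),
    (∀ (c : G) (hA : c ∈ A) (hB : c ∈ B), f ⟨c, hA⟩ = g ⟨c, hB⟩) →
    ∃ h : G →* K, (∀ a : ↥A, h a = f a) ∧ (∀ b : ↥B, h b = g b)

section Words

variable {G : Type u} [Group G]

/-- A word over the alphabet `X`. -/
def IsWordOver (X : Set G) (l : List G) : Prop := ∀ x ∈ l, x ∈ X

/-- A geodesic word over `X`. -/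
def IsGeodesicWord (X : Set G) (l : List G) : Prop :=
  IsWordOver X l ∧ l.length = wordLength X l.prod

/-- A `lam`-quasigeodesic word over `X`: every subword `v` satisfies
`l(v) ≤ lam * l_X(v̄) + lam`. -/
def IsQuasigeodesicWord (X : Set G) (lam : ℝ) (l : List G) : Prop :=
  IsWordOver X l ∧
    ∀ v : List G, v <:+: l → (v.length : ℝ) ≤ lam * (wordLength X v.prod : ℝ) + lam

/-- `g` is a shortest element of the subset `S` with respect to `wordLength X`. -/
def ShortestIn (X : Set G) (g : G) (S : Set G) : Prop :=
  g ∈ S ∧ ∀ s ∈ S, wordLength X g ≤ wordLength X s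

end Words

/-- `G` together with `ια, ιβ` is the pushout of `ℤ → A, 1 ↦ x` and `ℤ → B, 1 ↦ y`. -/
structure IsAmalgamOverZ {A : Type u} {B : Type v} {G : Type w}
    [Group A] [Group B] [Group G]
    (ια : A →* G) (ιβ : B →* G) (x : A) (y : B) : Prop where
  comm : ια x = ιβ y
  gen : ια.range ⊔ ιβ.range = ⊤
  univ : ∀ (K : Type (max u v w)) [Group K] (f : A →* K) (g : B →* K),
    f x = g y → ∃ h : G →* K, h.comp ια = f ∧ h.comp ιβ = g

section Hyperbolic

variable {α : Type*} [PseudoMetricSpace α]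

/-- The Gromov product in a pseudometric space. -/
noncomputable def gromovProduct (x y w : α) : ℝ := (dist x w + dist y w - dist x y) / 2

/-- Gromov's `δ`-hyperbolicity condition for a pseudometric space. -/
def GromovHyperbolic (α : Type*) [PseudoMetricSpace α] (δ : ℝ) : Prop :=
  ∀ x y z w : α,
    min (gromovProduct x y w) (gromovProduct y z w) - δ ≤ gromovProduct x z w

/-- Any two points are joined by a discrete geodesic. -/
def DiscretelyGeodesic (α : Type*) [PseudoMetricSpace α] : Prop :=
  ∀ x y : α, ∃ (N : ℕ) (g : ℕ → α), g 0 = x ∧ g N = y ∧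
    ∀ i j : ℕ, i ≤ j → j ≤ N → dist (g i) (g j) = (j : ℝ) - i

/-- The restriction of `f` to `{0, …, n}` is a discrete quasigeodesic. -/
def IsQuasigeodesicChain (lam : ℝ) (n : ℕ) (f : ℕ → α) : Prop :=
  (∀ i < n, dist (f i) (f (i + 1)) ≤ lam) ∧
    ∀ i j : ℕ, i ≤ j → j ≤ n → (j : ℝ) - i ≤ lam * dist (f i) (f j) + lam

theorem GromovHyperbolic.mono {δ δ' : ℝ} (h : GromovHyperbolic α δ) (hδ : δ ≤ δ') :
    GromovHyperbolic α δ' := fun x y z w => by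
  have := h x y z w
  linarith

theorem GromovHyperbolic.four_point {δ : ℝ} (h : GromovHyperbolic α δ) (x y z w : α) :
    dist x z + dist y w ≤ dist x y + dist z w + 2 * δ ∨
      dist x z + dist y w ≤ dist y z + dist x w + 2 * δ := by
  have := h x y z w
  unfold gromovProduct at this
  rcases min_choice ((dist x w + dist y w - dist x y) / 2)
    ((dist y w + dist z w - dist y z) / 2) with e | e <;> rw [e] at this
  · left; linarith
  · right; linarith

/-- Lower bound for the Gromov product of the endpoints of a short chain avoiding a ball. -/
theorem GromovHyperbolic.le_gromovProduct_of_chain {δ : ℝ} (h : GromovHyperbolic α δ)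
    {L R : ℝ} (hL : 0 ≤ L) (f : ℕ → α) (w : α) (k : ℕ) :
    ∀ i j : ℕ, i ≤ j → j - i ≤ 2 ^ k →
      (∀ m, i ≤ m → m < j → dist (f m) (f (m + 1)) ≤ L) →
      (∀ m, i ≤ m → m ≤ j → R ≤ dist (f m) w) →
      R - L / 2 - k * δ ≤ gromovProduct (f i) (f j) w := by
  induction k with
  | zero =>
    intro i j hij hk hs hR
    have h1 := hR i le_rfl hij
    have h2 := hR j hij le_rfl
    have h3 : dist (f i) (f j) ≤ L := by
      rcases hij.eq_or_lt with rfl | hlt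
      · simpa using hL
      · have : j = i + 1 := by omega
        subst this
        exact hs i le_rfl hlt
    simp only [gromovProduct]
    push_cast
    linarith
  | succ k ih =>
    intro i j hij hk hs hR
    rw [pow_succ] at hk
    set m := i + (j - i) / 2 with hm
    have h1 := ih i m (by omega) (by omega) (fun a ha hb => hs a ha (by omega))
      (fun a ha hb => hR a ha (by omega))
    have h2 := ih m j (by omega) (by omega) (fun a ha hb => hs a (by omega) hb)
      (fun a ha hb => hR a (by omega) hb)
    have h3 := h (f i) (f m) (f j) w
    have h4 := le_min h1 h2
    push_cast
    linarith

theorem exists_linear_le_two_pow (A B : ℝ) : ∃ k₀ : ℕ, ∀ k : ℕ, k₀ ≤ k → A * k + B ≤ 2 ^ k := by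
  have h1 := tendsto_pow_const_div_const_pow_of_one_lt 1 (one_lt_two : (1 : ℝ) < 2)
  have h0 := tendsto_pow_const_div_const_pow_of_one_lt 0 (one_lt_two : (1 : ℝ) < 2)
  have h := (h1.const_mul A).add (h0.const_mul B)
  simp only [mul_zero, add_zero] at h
  obtain ⟨k₀, hk₀⟩ := Filter.eventually_atTop.1 (h.eventually (gt_mem_nhds one_pos))
  refine ⟨k₀, fun k hk => ?_⟩
  have h2 := hk₀ k hk
  have hp : (0 : ℝ) < 2 ^ k := by positivity
  rw [pow_one, pow_zero, ← mul_div_assoc, ← mul_div_assoc, ← add_div, div_lt_one hp] at h2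
  linarith

/-- A geodesic stays in a uniform neighbourhood of every quasigeodesic with the same
endpoints. -/
theorem GromovHyperbolic.exists_geodesic_bound {δ : ℝ} (h : GromovHyperbolic α δ) (hδ : 1 ≤ δ)
    {lam : ℝ} (hlam : 1 ≤ lam) :
    ∃ B : ℝ, ∀ (n : ℕ) (f : ℕ → α), IsQuasigeodesicChain lam n f →
      ∀ (N : ℕ) (g : ℕ → α), g 0 = f 0 → g N = f n →
        (∀ i j : ℕ, i ≤ j → j ≤ N → dist (g i) (g j) = (j : ℝ) - i) →
        ∀ t ≤ N, ∃ i ≤ n, dist (f i) (g t) ≤ B := by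
  obtain ⟨k₀, hk₀⟩ := exists_linear_le_two_pow (lam * (12 * δ)) (lam * (12 * δ + 3))
  refine ⟨max (lam + 4 * δ) (2 * δ * (k₀ + 1)), ?_⟩
  intro n f hf N g hg0 hgN hg
  have hmin : ∀ t, ∃ i ≤ n, ∀ j ≤ n, dist (f i) (g t) ≤ dist (f j) (g t) := by
    intro t
    obtain ⟨i, hi, hi'⟩ := Finset.exists_min_image (Finset.range (n + 1))
      (fun i => dist (f i) (g t)) ⟨0, by simp⟩
    exact ⟨i, by simpa [Nat.lt_succ_iff] using hi,
      fun j hj => hi' j (by simpa [Nat.lt_succ_iff] using hj)⟩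
  choose ρ hρn hρ using hmin
  obtain ⟨t₀, ht₀, hmax⟩ := Finset.exists_max_image (Finset.range (N + 1))
    (fun t => dist (f (ρ t)) (g t)) ⟨0, by simp⟩
  have ht₀N : t₀ ≤ N := by simpa [Nat.lt_succ_iff] using ht₀
  set D := dist (f (ρ t₀)) (g t₀) with hD
  have hmax' : ∀ t ≤ N, dist (f (ρ t)) (g t) ≤ D :=
    fun t ht => hmax t (by simpa [Nat.lt_succ_iff] using ht)
  suffices hDB : D ≤ max (lam + 4 * δ) (2 * δ * (k₀ + 1)) from
    fun t ht => ⟨ρ t, hρn t, (hmax' t ht).trans hDB⟩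
  have hD0 : 0 ≤ D := dist_nonneg
  have hfar : ∀ j ≤ n, D ≤ dist (f j) (g t₀) := fun j hj => hρ t₀ j hj
  set K := ⌈2 * D⌉₊ with hK
  have hK1 : 2 * D ≤ K := Nat.le_ceil _
  have hK2 : (K : ℝ) ≤ 2 * D + 1 := (Nat.ceil_lt_add_one (by linarith)).le
  have hleft : ∃ i ≤ n, dist (f i) (g t₀) ≤ K + D ∧
      D ≤ gromovProduct (g (t₀ - K)) (f i) (g t₀) := by
    rcases le_total t₀ K with hc | hc
    · refine ⟨0, Nat.zero_le _, ?_, ?_⟩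
      · rw [← hg0, hg 0 t₀ (Nat.zero_le _) ht₀N]
        have : (t₀ : ℝ) ≤ K := by exact_mod_cast hc
        push_cast
        linarith
      · rw [Nat.sub_eq_zero_of_le hc, hg0]
        have := hfar 0 (Nat.zero_le _)
        simp only [gromovProduct, dist_self]
        linarith
    · have h1 := hg (t₀ - K) t₀ (Nat.sub_le _ _) ht₀N
      rw [Nat.cast_sub hc] at h1
      have h2 := hmax' (t₀ - K) (by omega)
      have h3 := hfar _ (hρn (t₀ - K))
      have h4 := dist_triangle (f (ρ (t₀ - K))) (g (t₀ - K)) (g t₀)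
      refine ⟨_, hρn (t₀ - K), by linarith, ?_⟩
      rw [dist_comm] at h2
      simp only [gromovProduct]
      linarith
  have hright : ∃ i ≤ n, dist (f i) (g t₀) ≤ K + D ∧
      D ≤ gromovProduct (f i) (g (min (t₀ + K) N)) (g t₀) := by
    rcases le_total N (t₀ + K) with hc | hc
    · refine ⟨n, le_rfl, ?_, ?_⟩
      · rw [← hgN, dist_comm, hg t₀ N ht₀N le_rfl]
        have : (N : ℝ) ≤ t₀ + K := by exact_mod_cast hc
        linarith
      · rw [min_eq_right hc, hgN]
        have := hfar n le_rfl
        simp only [gromovProduct, dist_self]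
        linarith
    · have h1 := hg t₀ (t₀ + K) (Nat.le_add_right _ _) hc
      rw [dist_comm] at h1
      push_cast at h1
      have h2 := hmax' (t₀ + K) hc
      have h3 := hfar _ (hρn (t₀ + K))
      have h4 := dist_triangle (f (ρ (t₀ + K))) (g (t₀ + K)) (g t₀)
      refine ⟨_, hρn (t₀ + K), by linarith, ?_⟩
      rw [min_eq_left hc]
      simp only [gromovProduct]
      linarith
  obtain ⟨i, hi, hiK, hiD⟩ := hleft
  obtain ⟨j, hj, hjK, hjD⟩ := hright
  have hzero : gromovProduct (g (t₀ - K)) (g (min (t₀ + K) N)) (g t₀) = 0 := by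
    have h1 := hg (t₀ - K) t₀ (Nat.sub_le _ _) ht₀N
    have h2 := hg t₀ (min (t₀ + K) N) (le_min (Nat.le_add_right _ _) ht₀N) (min_le_right _ _)
    have h3 := hg (t₀ - K) (min (t₀ + K) N)
      ((Nat.sub_le _ _).trans (le_min (Nat.le_add_right _ _) ht₀N)) (min_le_right _ _)
    rw [dist_comm] at h2
    simp only [gromovProduct]
    linarith
  by_contra hcon
  rw [not_le, max_lt_iff] at hcon
  obtain ⟨hD1, hD2⟩ := hcon
  have hprod : gromovProduct (f i) (f j) (g t₀) ≤ 2 * δ := by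
    have h1 := h (g (t₀ - K)) (f i) (g (min (t₀ + K) N)) (g t₀)
    have h2 := h (f i) (f j) (g (min (t₀ + K) N)) (g t₀)
    rw [hzero] at h1
    by_contra hc
    rw [not_le] at hc
    have h3 : δ < gromovProduct (f i) (g (min (t₀ + K) N)) (g t₀) := by
      have : 2 * δ < min (gromovProduct (f i) (f j) (g t₀))
        (gromovProduct (f j) (g (min (t₀ + K) N)) (g t₀)) := lt_min hc (by linarith)
      linarith
    have : δ < min (gromovProduct (g (t₀ - K)) (f i) (g t₀))
      (gromovProduct (f i) (g (min (t₀ + K) N)) (g t₀)) := lt_min (by linarith) h3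
    linarith
  have hdist : dist (f i) (f j) ≤ 6 * D + 2 := by
    have := dist_triangle_right (f i) (f j) (g t₀)
    linarith
  set k := ⌊D / (2 * δ)⌋₊ with hk
  have hδ0 : 0 < 2 * δ := by linarith
  have hk1 : 2 * δ * k ≤ D := by
    have := Nat.floor_le (div_nonneg hD0 hδ0.le)
    rw [le_div_iff₀ hδ0] at this
    linarith
  have hk2 : D < 2 * δ * (k + 1) := by
    have := Nat.lt_floor_add_one (D / (2 * δ))
    rw [div_lt_iff₀ hδ0] at this
    linarith
  have hk0k : k₀ ≤ k := by
    have : (k₀ : ℝ) + 1 < k + 1 := lt_of_mul_lt_mul_left (hD2.trans hk2) hδ0.le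
    have : (k₀ : ℝ) < k := by linarith
    exact_mod_cast this.le
  have hpow := hk₀ k hk0k
  have key : ∀ i j : ℕ, i ≤ j → j ≤ n → dist (f i) (f j) ≤ 6 * D + 2 →
      gromovProduct (f i) (f j) (g t₀) ≤ 2 * δ → False := by
    intro i j hij hj hd hp
    have h1 := hf.2 i j hij hj
    have h2 : (j : ℝ) - i ≤ 2 ^ k := by nlinarith
    have h3 : j - i ≤ 2 ^ k := by
      have : ((j - i : ℕ) : ℝ) ≤ ((2 ^ k : ℕ) : ℝ) := by
        rw [Nat.cast_sub hij]
        push_cast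
        exact h2
      exact_mod_cast this
    have h4 := h.le_gromovProduct_of_chain (by linarith : 0 ≤ lam) f (g t₀) k i j hij h3
      (fun m _ hm => hf.1 m (by omega)) (fun m _ hm => hfar m (by omega))
    linarith
  rcases le_total i j with hij | hij
  · exact key i j hij hj hdist hprod
  · refine key j i hij hi (by rwa [dist_comm]) ?_
    have : gromovProduct (f j) (f i) (g t₀) = gromovProduct (f i) (f j) (g t₀) := by
      simp only [gromovProduct, dist_comm (f j) (f i)]
      ring
    rwa [this]

/-- A point at which the endpoints have small Gromov product is close to every quasigeodesic
joining these endpoints. -/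
theorem GromovHyperbolic.exists_close_of_gromovProduct_le {δ : ℝ} (h : GromovHyperbolic α δ)
    (hδ : 1 ≤ δ) (hgeo : DiscretelyGeodesic α) {lam : ℝ} (hlam : 1 ≤ lam) :
    ∃ B : ℝ, ∀ (n : ℕ) (f : ℕ → α), IsQuasigeodesicChain lam n f →
      ∀ (w : α) (D : ℝ), gromovProduct (f 0) (f n) w ≤ D → ∃ i ≤ n, dist (f i) w ≤ D + B := by
  obtain ⟨B, hB⟩ := h.exists_geodesic_bound hδ hlam
  refine ⟨B + 2 * δ + 1, fun n f hf w D hD => ?_⟩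
  obtain ⟨N, g, hg0, hgN, hg⟩ := hgeo (f 0) (f n)
  have hN : dist (f 0) (f n) = N := by
    rw [← hg0, ← hgN, hg 0 N (Nat.zero_le _) le_rfl]
    simp
  have hT0 : 0 ≤ (dist (f 0) w + N - dist (f n) w) / 2 := by
    rw [← hN]
    linarith [dist_triangle (f n) (f 0) w, dist_comm (f n) (f 0)]
  set t := ⌊(dist (f 0) w + N - dist (f n) w) / 2⌋₊ with ht
  have ht1 := Nat.floor_le hT0
  have ht2 := Nat.lt_floor_add_one ((dist (f 0) w + N - dist (f n) w) / 2)
  rw [← ht] at ht1 ht2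
  have htN : t ≤ N := by
    have : (t : ℝ) ≤ N := by
      have := dist_triangle (f 0) (f n) w
      rw [hN] at this
      linarith
    exact_mod_cast this
  obtain ⟨i, hi, hiB⟩ := hB n f hf N g hg0 hgN hg t htN
  refine ⟨i, hi, ?_⟩
  have h1 := hg 0 t (Nat.zero_le _) htN
  have h2 := hg t N htN le_rfl
  rw [hg0] at h1
  rw [hgN] at h2
  push_cast at h1
  have htri := dist_triangle (f i) (g t) w
  simp only [gromovProduct, hN] at hD
  have c1 := dist_comm (g t) (f n)
  have c2 := dist_comm (g t) w
  have c3 := dist_comm (f n) w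
  rcases h.four_point (f 0) w (f n) (g t) with h3 | h3 <;> linarith

end Hyperbolic

section InvariantMetric

variable {G : Type*} [Group G] [PseudoMetricSpace G] [IsIsometricSMul G G]

theorem dist_one_pow_le (g : G) (n : ℕ) : dist 1 (g ^ n) ≤ n * dist 1 g := by
  induction n with
  | zero => simp
  | succ n ih =>
    have h1 := dist_triangle 1 (g ^ n) (g ^ (n + 1))
    have h2 : dist (g ^ n) (g ^ (n + 1)) = dist 1 g := by
      rw [pow_succ]
      simpa using dist_mul_left (g ^ n) 1 g
    push_cast
    linarith

/-- An isometry whose square moves a point much farther than the isometry itself translates it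
linearly. -/
theorem GromovHyperbolic.linear_growth {δ : ℝ} (h : GromovHyperbolic G δ) (hδ : 0 ≤ δ) {g x : G}
    (hg : dist x (g * x) + 2 * δ + 1 ≤ dist x (g ^ 2 * x)) (n : ℕ) :
    (n : ℝ) ≤ dist x (g ^ n * x) := by
  have hs : ∀ n, dist x (g ^ n * x) + 1 ≤ dist x (g ^ (n + 1) * x) := by
    intro n
    induction n with
    | zero =>
      have h1 := dist_triangle x (g * x) (g ^ 2 * x)
      rw [pow_two, mul_assoc, dist_mul_left] at h1
      rw [pow_two, mul_assoc] at hg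
      simp only [pow_zero, one_mul, dist_self, zero_add, pow_one]
      linarith
    | succ n ih =>
      have e1 : dist (g ^ n * x) (g ^ (n + 1) * x) = dist x (g * x) := by
        rw [pow_succ, mul_assoc, dist_mul_left]
      have e2 : dist (g ^ (n + 1) * x) (g ^ (n + 1 + 1) * x) = dist x (g * x) := by
        rw [pow_succ g (n + 1), mul_assoc, dist_mul_left]
      have e3 : dist (g ^ n * x) (g ^ (n + 1 + 1) * x) = dist x (g ^ 2 * x) := by
        rw [add_assoc, pow_add, mul_assoc, dist_mul_left]
      rcases h.four_point x (g ^ n * x) (g ^ (n + 1) * x) (g ^ (n + 1 + 1) * x) with h4 | h4 <;>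
        linarith
  induction n with
  | zero => simp
  | succ n ih =>
    have := hs n
    push_cast
    linarith

/-- If `g` commutes with `y` and `x` lies deep inside a geodesic from `1` to `y`, then `g` displaces
`x` by a bounded amount, unless `g ^ 2` displaces `x` much farther. -/
theorem GromovHyperbolic.displacement_le {δ : ℝ} (h : GromovHyperbolic G δ) (hδ : 0 ≤ δ)
    {g x y : G} {M : ℝ} (hcomm : g * y = y * g) (hM : dist 1 g ≤ M)
    (hx : dist 1 x + dist x y = dist 1 y)
    (hx1 : 4 * M + 10 * δ + 1 ≤ dist 1 x) (hx2 : 4 * M + 10 * δ + 1 ≤ dist x y)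
    (hg : dist x (g ^ 2 * x) ≤ dist x (g * x) + 2 * δ + 1) :
    dist x (g * x) ≤ 16 * δ + 1 := by
  have hM0 : 0 ≤ M := dist_nonneg.trans hM
  have e1 : dist g (g * x) = dist 1 x := by simpa using dist_mul_left g 1 x
  have e2 : dist (g * y) (g * x) = dist x y := by rw [dist_mul_left, dist_comm]
  have e3 : dist y (g * y) = dist 1 g := by rw [hcomm]; simpa using dist_mul_left y 1 g
  have e4 : dist g (g * y) = dist 1 y := by simpa using dist_mul_left g 1 y
  have e5 : dist g (g ^ 2 * x) = dist 1 (g * x) := by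
    rw [pow_two, mul_assoc]; simpa using dist_mul_left g 1 (g * x)
  have e6 : dist (g * x) (g ^ 2 * x) = dist x (g * x) := by
    rw [pow_two, mul_assoc, dist_mul_left]
  have t1 := dist_triangle 1 g (g * x)
  have t2 := dist_triangle_left g (g * x) 1
  have t3 := dist_triangle y (g * y) (g * x)
  have t4 := dist_triangle_left (g * y) (g * x) y
  have c1 := dist_comm g (1 : G)
  have c2 := dist_comm y (g * x)
  have c3 := dist_comm y x
  have c5 := dist_comm y (1 : G)
  -- the translate `g * x` lies close to the geodesic from `1` to `y`
  have hline : dist 1 (g * x) + dist (g * x) y ≤ dist 1 y + 4 * δ := by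
    rcases h.four_point g 1 (g * y) (g * x) with h1 | h1
    · linarith
    · rcases h.four_point 1 y (g * y) (g * x) with h2 | h2 <;> linarith
  have hdist : dist x (g * x) ≤ |dist 1 (g * x) - dist 1 x| + 6 * δ := by
    have a1 := le_abs_self (dist 1 (g * x) - dist 1 x)
    have a2 := neg_abs_le (dist 1 (g * x) - dist 1 x)
    rcases h.four_point x 1 (g * x) y with h1 | h1
    · have := dist_comm x (1 : G)
      linarith
    · linarith
  have habs : |dist 1 (g * x) - dist 1 x| ≤ M := abs_le.2 ⟨by linarith, by linarith⟩
  -- the position of `g ^ 2 * x` is determined by those of `x` and `g * x`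
  have hadd1 : dist 1 (g ^ 2 * x) + dist 1 x ≤ 2 * dist 1 (g * x) + 2 * δ := by
    rcases h.four_point 1 g (g ^ 2 * x) (g * x) with h1 | h1
    · linarith [dist_comm (g ^ 2 * x) (g * x)]
    · linarith
  have hadd2 : 2 * dist 1 (g * x) ≤ dist 1 (g ^ 2 * x) + dist 1 x + 2 * δ := by
    rcases h.four_point 1 g (g * x) (g ^ 2 * x) with h1 | h1 <;> linarith
  have t6 := dist_triangle 1 x (g ^ 2 * x)
  have t7 := dist_triangle_right 1 x (g ^ 2 * x)
  rcases abs_cases (dist 1 (g * x) - dist 1 x) with ⟨ha, _⟩ | ⟨ha, _⟩ <;> rw [ha] at hdist <;>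
    linarith

/-- In a hyperbolic group, some power of an element of infinite order has a point that its square
moves much farther. -/
theorem GromovHyperbolic.exists_pow_displacement {δ : ℝ} (h : GromovHyperbolic G δ) (hδ : 0 ≤ δ)
    (hgeo : DiscretelyGeodesic G) (hfin : ∀ r : ℝ, {g : G | dist 1 g ≤ r}.Finite) {g : G}
    (hg : Function.Injective fun n : ℕ => g ^ n) :
    ∃ (i : ℕ) (x : G), 0 < i ∧ dist x (g ^ i * x) + 2 * δ + 1 ≤ dist x ((g ^ i) ^ 2 * x) := by
  by_contra! hcon
  set S := (hfin (16 * δ + 1)).toFinset with hS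
  set M : ℝ := S.card * dist 1 g with hM
  have hM0 : 0 ≤ M := mul_nonneg (Nat.cast_nonneg _) dist_nonneg
  obtain ⟨k, hk⟩ : ∃ k : ℕ, 2 * (4 * M + 10 * δ + 1) + 2 < dist 1 (g ^ k) := by
    by_contra! hc
    refine Set.infinite_range_of_injective hg ((hfin (2 * (4 * M + 10 * δ + 1) + 2)).subset ?_)
    rintro _ ⟨k, rfl⟩
    exact hc k
  obtain ⟨N, p, hp0, hpN, hp⟩ := hgeo 1 (g ^ k)
  have hN : dist 1 (g ^ k) = N := by
    rw [← hp0, ← hpN, hp 0 N (Nat.zero_le _) le_rfl]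
    simp
  have h1 := hp 0 (N / 2) (Nat.zero_le _) (Nat.div_le_self _ _)
  have h2 := hp (N / 2) N (Nat.div_le_self _ _) le_rfl
  rw [hp0] at h1
  rw [hpN] at h2
  have h3 : 2 * ((N / 2 : ℕ) : ℝ) ≤ N := by exact_mod_cast Nat.mul_div_le N 2
  have h4 : (N : ℝ) ≤ 2 * ((N / 2 : ℕ) : ℝ) + 1 := by
    have : N ≤ 2 * (N / 2) + 1 := by omega
    exact_mod_cast this
  push_cast at h1
  set x := p (N / 2) with hx
  have hmem : ∀ i ∈ Finset.range (S.card + 1), x⁻¹ * (g ^ i * x) ∈ S := by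
    intro i hi
    rw [hS, Set.Finite.mem_toFinset, Set.mem_ofPred_eq]
    have e : dist 1 (x⁻¹ * (g ^ i * x)) = dist x (g ^ i * x) := by
      rw [← dist_mul_left x, mul_one, mul_inv_cancel_left]
    rw [e]
    rcases Nat.eq_zero_or_pos i with rfl | hi0
    · simp only [pow_zero, one_mul, dist_self]
      linarith
    · refine h.displacement_le hδ (M := M) (y := g ^ k) ?_ ?_ (by linarith) (by linarith)
        (by linarith) (hcon i x hi0).le
      · rw [← pow_add, ← pow_add, add_comm]
      · refine (dist_one_pow_le g i).trans (mul_le_mul_of_nonneg_right ?_ dist_nonneg)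
        have : i ≤ S.card := by simpa [Nat.lt_succ_iff] using hi
        exact_mod_cast this
  have hcard := Finset.card_le_card_of_injOn _ hmem (fun i _ j _ hij => by
    simpa using hg (mul_right_cancel (mul_left_cancel hij)))
  simp at hcard

/-- Powers of an element of infinite order of a hyperbolic group form a quasigeodesic. -/
theorem GromovHyperbolic.exists_pow_isQuasigeodesicChain {δ : ℝ} (h : GromovHyperbolic G δ)
    (hδ : 0 ≤ δ) (hgeo : DiscretelyGeodesic G)
    (hfin : ∀ r : ℝ, {g : G | dist 1 g ≤ r}.Finite) {g : G} (hg : ¬IsOfFinOrder g) :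
    ∃ lam : ℝ, 1 ≤ lam ∧ ∀ n, IsQuasigeodesicChain lam n (fun i : ℕ => g ^ i) := by
  obtain ⟨i, x, hi, hix⟩ := h.exists_pow_displacement hδ hgeo hfin
    (injective_pow_iff_not_isOfFinOrder.2 hg)
  have hi1 : (1 : ℝ) ≤ i := by exact_mod_cast hi
  have hgrow : ∀ m : ℕ, (m : ℝ) ≤
      i * dist 1 (g ^ m) + i * (i * dist 1 g + 2 * dist 1 x + 1) := by
    intro m
    have h1 := h.linear_growth hδ hix (m / i)
    rw [← pow_mul] at h1
    have h2 := dist_triangle4 x 1 (g ^ (i * (m / i))) (g ^ (i * (m / i)) * x)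
    have h3 : dist (g ^ (i * (m / i))) (g ^ (i * (m / i)) * x) = dist 1 x := by
      simpa using dist_mul_left (g ^ (i * (m / i))) 1 x
    have h4 := dist_triangle_right 1 (g ^ (i * (m / i))) (g ^ m)
    have h5 : dist (g ^ (i * (m / i))) (g ^ m) = dist 1 (g ^ (m % i)) := by
      conv_lhs => rw [← Nat.div_add_mod m i]
      rw [pow_add]
      have e : i * (((i * (m / i)) + m % i) / i) = i * (m / i) := by rw [Nat.div_add_mod]
      rw [e]
      simpa using dist_mul_left (g ^ (i * (m / i))) 1 (g ^ (m % i))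
    have h6 : dist 1 (g ^ (m % i)) ≤ i * dist 1 g := by
      refine (dist_one_pow_le g _).trans (mul_le_mul_of_nonneg_right ?_ dist_nonneg)
      exact_mod_cast (Nat.mod_lt m hi).le
    have h7 : (m : ℝ) ≤ i * (m / i : ℕ) + i := by
      have : m ≤ i * (m / i) + i := by
        have := Nat.div_add_mod m i
        have := Nat.mod_lt m hi
        omega
      exact_mod_cast this
    have c1 := dist_comm x (1 : G)
    have h8 : ((m / i : ℕ) : ℝ) + 1 ≤ dist 1 (g ^ m) + (i * dist 1 g + 2 * dist 1 x + 1) := by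
      linarith
    nlinarith
  have hd : ∀ a b : ℕ, dist (g ^ a) (g ^ (a + b)) = dist 1 (g ^ b) := fun a b => by
    rw [pow_add]
    simpa using dist_mul_left (g ^ a) 1 (g ^ b)
  set E : ℝ := i * (i * dist 1 g + 2 * dist 1 x + 1) with hE
  have hE0 : 0 ≤ E := by positivity
  refine ⟨i + E + dist 1 g, by linarith [dist_nonneg (x := (1 : G)) (y := g)], fun n => ⟨?_, ?_⟩⟩
  · intro j _
    rw [hd j 1, pow_one]
    linarith
  · intro a b hab _
    obtain ⟨c, rfl⟩ := Nat.exists_eq_add_of_le hab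
    simp only [hd]
    have h1 := hgrow c
    have h2 := dist_nonneg (x := (1 : G)) (y := g)
    have h3 := dist_nonneg (x := (1 : G)) (y := g ^ c)
    push_cast
    nlinarith

/-- Geodesics from `1` to elements of `C` stay in the `R`-neighbourhood of `C`. -/
def GeodesicallyQuasiconvex (C : Subgroup G) (R : ℝ) : Prop :=
  ∀ c ∈ C, ∀ w : G, dist 1 w + dist w c ≤ dist 1 c → ∃ c' ∈ C, dist c' w ≤ R

theorem exists_dist_zpow_le {C : Subgroup G} (hC : IsVirtuallyCyclic C) :
    ∃ z ∈ C, ∃ F : ℝ, ∀ c ∈ C, ∃ n : ℤ, dist (z ^ n) c ≤ F := by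
  obtain ⟨Z, hZ, hfi⟩ := hC
  obtain ⟨z, hz⟩ := hZ.exists_generator
  obtain ⟨F, hF⟩ := (Set.finite_range
    (fun q : C ⧸ Z => dist (1 : G) ((q.out : C) : G)⁻¹)).bddAbove
  refine ⟨(z : C), (z : C).2, F, fun c hc => ?_⟩
  set r : C := (QuotientGroup.mk (s := Z) (⟨c, hc⟩⁻¹ : C)).out with hr
  have hr1 : r⁻¹ * (⟨c, hc⟩⁻¹ : C) ∈ Z := by
    rw [← QuotientGroup.eq, hr, QuotientGroup.out_eq']
  have hr2 : (⟨c, hc⟩ : C) * r ∈ Z := by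
    have := Z.inv_mem hr1
    rwa [mul_inv_rev, inv_inv, inv_inv] at this
  obtain ⟨n, hn⟩ := Subgroup.mem_zpowers_iff.1 (hz ⟨_, hr2⟩)
  have hn' : ((z : C) : G) ^ n = c * (r : G) := by
    have := congrArg (fun y : Z => ((y : C) : G)) hn
    simpa using this
  refine ⟨n, ?_⟩
  have : dist (((z : C) : G) ^ n) c = dist 1 (r : G)⁻¹ := by
    rw [← dist_mul_left (((z : C) : G) ^ n) 1, hn']
    simp
  rw [this]
  exact hF ⟨_, rfl⟩

theorem GromovHyperbolic.quasiconvex_of_isVirtuallyCyclic {δ : ℝ} (h : GromovHyperbolic G δ)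
    (hδ : 1 ≤ δ) (hgeo : DiscretelyGeodesic G)
    (hfin : ∀ r : ℝ, {g : G | dist 1 g ≤ r}.Finite) {C : Subgroup G}
    (hC : IsVirtuallyCyclic C) : ∃ R : ℝ, GeodesicallyQuasiconvex C R := by
  obtain ⟨z, hzC, F, hF⟩ := exists_dist_zpow_le hC
  by_cases hz : IsOfFinOrder z
  · obtain ⟨E, hE⟩ := ((finite_zpowers.2 hz).image (fun y => dist 1 y)).bddAbove
    refine ⟨E + F, fun c hc w hw => ⟨1, C.one_mem, ?_⟩⟩
    obtain ⟨n, hn⟩ := hF c hc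
    have h1 : dist 1 (z ^ n) ≤ E := hE ⟨z ^ n, ⟨n, rfl⟩, rfl⟩
    linarith [dist_triangle 1 (z ^ n) c, dist_nonneg (x := w) (y := c)]
  · have hpow : ∀ a : G, ¬IsOfFinOrder a → ∃ B : ℝ, ∀ (n : ℕ) (w : G),
        gromovProduct 1 (a ^ n) w ≤ F → ∃ i : ℕ, dist (a ^ i) w ≤ F + B := by
      intro a ha
      obtain ⟨lam, hlam, hchain⟩ :=
        h.exists_pow_isQuasigeodesicChain (by linarith) hgeo hfin ha
      obtain ⟨B, hB⟩ := h.exists_close_of_gromovProduct_le hδ hgeo hlam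
      refine ⟨B, fun n w hw => ?_⟩
      obtain ⟨i, -, hi⟩ := hB n _ (hchain n) w F (by simpa using hw)
      exact ⟨i, hi⟩
    obtain ⟨B₁, hB₁⟩ := hpow z hz
    obtain ⟨B₂, hB₂⟩ := hpow z⁻¹ (by rwa [isOfFinOrder_inv_iff])
    refine ⟨max (F + B₁) (F + B₂), fun c hc w hw => ?_⟩
    obtain ⟨n, hn⟩ := hF c hc
    have hgp : gromovProduct 1 (z ^ n) w ≤ F := by
      simp only [gromovProduct]
      linarith [dist_triangle (z ^ n) c w, dist_triangle 1 (z ^ n) c, dist_comm c w]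
    obtain ⟨m, rfl | rfl⟩ := n.eq_nat_or_neg
    · rw [zpow_natCast] at hgp
      obtain ⟨i, hi⟩ := hB₁ m w hgp
      exact ⟨z ^ i, C.pow_mem hzC i, hi.trans (le_max_left _ _)⟩
    · rw [zpow_neg, zpow_natCast, ← inv_pow] at hgp
      obtain ⟨i, hi⟩ := hB₂ m w hgp
      exact ⟨z⁻¹ ^ i, C.pow_mem (C.inv_mem hzC) i, hi.trans (le_max_right _ _)⟩

/-- Quasiconvex subgroups with finite intersection have bounded Gromov products. -/
theorem GromovHyperbolic.exists_gromovProduct_le {δ : ℝ} (h : GromovHyperbolic G δ)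
    (hgeo : DiscretelyGeodesic G)
    (hfin : ∀ r : ℝ, {g : G | dist 1 g ≤ r}.Finite) {C₁ C₂ : Subgroup G} {R₁ R₂ : ℝ}
    (h₁ : GeodesicallyQuasiconvex C₁ R₁) (h₂ : GeodesicallyQuasiconvex C₂ R₂)
    (hinf : ((C₁ ⊓ C₂ : Subgroup G) : Set G).Finite) :
    ∃ D : ℝ, ∀ p ∈ C₁, ∀ q ∈ C₂, gromovProduct p q 1 ≤ D := by
  classical
  set S := (hfin (R₁ + R₂ + 4 * δ)).toFinset with hS
  set I := hinf.toFinset with hI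
  set L := ⌈2 * R₁⌉₊ + 1 with hL
  refine ⟨L * (S.card * I.card : ℕ), fun p hp q hq => ?_⟩
  by_contra! hcon
  have hpoints : ∀ s ∈ Finset.range (S.card * I.card + 1), ∃ w a b : G,
      dist 1 w = (L * s : ℕ) ∧ a ∈ C₁ ∧ b ∈ C₂ ∧ dist a w ≤ R₁ ∧ a⁻¹ * b ∈ S := by
    intro s hs
    have hs' : s ≤ S.card * I.card := by simpa [Nat.lt_succ_iff] using hs
    have ht : ((L * s : ℕ) : ℝ) < gromovProduct p q 1 := by
      refine lt_of_le_of_lt ?_ hcon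
      exact_mod_cast Nat.mul_le_mul_left L hs'
    set t := L * s with ht_def
    have hpoint : ∀ y : G, gromovProduct p q 1 ≤ dist y 1 →
        ∃ w, dist 1 w = t ∧ dist 1 w + dist w y = dist 1 y := by
      intro y hy
      obtain ⟨N, g, hg0, hgN, hg⟩ := hgeo 1 y
      have hN := hg 0 N (Nat.zero_le _) le_rfl
      rw [hg0, hgN] at hN
      push_cast at hN
      have htN : t ≤ N := by
        have : (t : ℝ) ≤ N := by linarith [dist_comm y 1]
        exact_mod_cast this
      have h1 := hg 0 t (Nat.zero_le _) htN
      have h2 := hg t N htN le_rfl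
      rw [hg0] at h1
      rw [hgN] at h2
      push_cast at h1
      exact ⟨g t, by linarith, by linarith⟩
    have hpq : gromovProduct p q 1 ≤ dist p 1 := by
      simp only [gromovProduct]
      linarith [dist_triangle_left q 1 p]
    have hqp : gromovProduct p q 1 ≤ dist q 1 := by
      simp only [gromovProduct]
      linarith [dist_triangle p q 1]
    obtain ⟨w, hw, hwp⟩ := hpoint p hpq
    obtain ⟨v, hv, hvq⟩ := hpoint q hqp
    obtain ⟨a, ha, haw⟩ := h₁ p hp w hwp.le
    obtain ⟨b, hb, hbv⟩ := h₂ q hq v hvq.le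
    refine ⟨w, a, b, hw, ha, hb, haw, ?_⟩
    have hwv : dist w v ≤ 4 * δ := by
      have g1 : gromovProduct w p 1 = t := by
        simp only [gromovProduct]
        linarith [dist_comm w 1, dist_comm p 1]
      have g2 : gromovProduct q v 1 = t := by
        simp only [gromovProduct]
        linarith [dist_comm v 1, dist_comm q 1, dist_comm q v]
      have g3 := h w p q 1
      have g4 := h w q v 1
      rw [g1, min_eq_left ht.le] at g3
      rw [g2] at g4
      have hδ0 : 0 ≤ δ := by
        have := h (1 : G) 1 1 1
        simp only [min_self] at this
        linarith
      have g5 := le_min g3 (by linarith : (t : ℝ) - δ ≤ t)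
      have g6 : (t : ℝ) - 2 * δ ≤ gromovProduct w v 1 := by linarith
      simp only [gromovProduct] at g6
      linarith [dist_comm w 1, dist_comm v 1]
    rw [hS, Set.Finite.mem_toFinset, Set.mem_ofPred_eq]
    have e : dist 1 (a⁻¹ * b) = dist a b := by
      rw [← dist_mul_left a, mul_one, mul_inv_cancel_left]
    rw [e]
    linarith [dist_triangle4 a w v b, dist_comm b v]
  choose! w a b hw ha hb haw hab using hpoints
  obtain ⟨u, hu, hcard⟩ := Finset.exists_lt_card_fiber_of_mul_lt_card_of_maps_to hab
    (n := I.card) (by simp)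
  obtain ⟨s₀, hs₀⟩ := Finset.card_pos.1 (Nat.zero_lt_of_lt hcard)
  rw [Finset.mem_filter] at hs₀
  refine absurd (Finset.card_le_card_of_injOn (t := I) (fun s => a s * (a s₀)⁻¹) ?_ ?_)
    (not_le.2 hcard)
  · intro s hs
    rw [Finset.mem_coe, Finset.mem_filter] at hs
    simp only [hI, Set.Finite.coe_toFinset, SetLike.mem_coe]
    refine ⟨C₁.mul_mem (ha s hs.1) (C₁.inv_mem (ha s₀ hs₀.1)), ?_⟩
    have e : a s * (a s₀)⁻¹ = b s * (b s₀)⁻¹ := by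
      have e1 : b s = a s * u := by rw [← hs.2, mul_inv_cancel_left]
      have e2 : b s₀ = a s₀ * u := by rw [← hs₀.2, mul_inv_cancel_left]
      rw [e1, e2]
      group
    rw [e]
    exact C₂.mul_mem (hb s hs.1) (C₂.inv_mem (hb s₀ hs₀.1))
  · intro s hs s' hs' hss
    rw [Finset.mem_coe, Finset.mem_filter] at hs hs'
    have haa : a s = a s' := mul_right_cancel hss
    have d1 := haw s hs.1
    have d2 := haw s' hs'.1
    rw [← haa] at d2
    have e1 := hw s hs.1
    have e2 := hw s' hs'.1
    have hRL : 2 * R₁ < L := by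
      rw [hL]
      push_cast
      linarith [Nat.le_ceil (2 * R₁)]
    have key : ∀ m n : ℕ, m < n → ((L * n : ℕ) : ℝ) - (L * m : ℕ) ≤ 2 * R₁ → False := by
      intro m n hmn hle
      have : L * m + L ≤ L * n := by nlinarith
      have : ((L * m : ℕ) : ℝ) + L ≤ (L * n : ℕ) := by exact_mod_cast this
      linarith
    have t1 := dist_triangle 1 (w s) (w s')
    have t2 := dist_triangle 1 (w s') (w s)
    have t3 := dist_triangle_left (w s) (w s') (a s)
    have t4 := dist_comm (w s') (w s)
    rcases lt_trichotomy s s' with hlt | heq | hlt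
    · exact (key s s' hlt (by linarith)).elim
    · exact heq
    · exact (key s' s hlt (by linarith)).elim

end InvariantMetric

section WordMetric

variable {G : Type*} [Group G] {X : Set G}

theorem wordLength_list_prod_le {l : List G} (hl : ∀ x ∈ l, x ∈ X) :
    wordLength X l.prod ≤ l.length := Nat.sInf_le ⟨l, rfl, hl, rfl⟩

theorem IsSymmGen.exists_list (hX : IsSymmGen X) (g : G) :
    ∃ l : List G, l.length = wordLength X g ∧ (∀ x ∈ l, x ∈ X) ∧ l.prod = g := by
  refine Nat.sInf_mem
    (s := {n : ℕ | ∃ l : List G, l.length = n ∧ (∀ x ∈ l, x ∈ X) ∧ l.prod = g}) ?_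
  have hg : g ∈ Subgroup.closure X := by rw [hX.2.2]; trivial
  rw [← Subgroup.mem_toSubmonoid, Subgroup.closure_toSubmonoid] at hg
  obtain ⟨l, hl, rfl⟩ := Submonoid.exists_list_of_mem_closure hg
  refine ⟨l.length, l, rfl, fun x hx => ?_, rfl⟩
  rcases hl x hx with h | h
  · exact h
  · simpa using hX.2.1 _ (Set.mem_inv.1 h)

theorem wordLength_one : wordLength X (1 : G) = 0 := by
  simpa using wordLength_list_prod_le (X := X) (l := []) (by simp)

theorem IsSymmGen.wordLength_mul_le (hX : IsSymmGen X) (g h : G) :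
    wordLength X (g * h) ≤ wordLength X g + wordLength X h := by
  obtain ⟨l, hl, hlX, rfl⟩ := hX.exists_list g
  obtain ⟨m, hm, hmX, rfl⟩ := hX.exists_list h
  rw [← hl, ← hm, ← List.prod_append, ← List.length_append]
  refine wordLength_list_prod_le fun x hx => ?_
  rcases List.mem_append.1 hx with hx | hx
  exacts [hlX x hx, hmX x hx]

theorem IsSymmGen.wordLength_inv_le (hX : IsSymmGen X) (g : G) :
    wordLength X g⁻¹ ≤ wordLength X g := by
  obtain ⟨l, hl, hlX, rfl⟩ := hX.exists_list g
  rw [List.prod_inv_reverse, ← hl]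
  refine (wordLength_list_prod_le fun x hx => ?_).trans (by simp)
  rw [List.mem_reverse, List.mem_map] at hx
  obtain ⟨y, hy, rfl⟩ := hx
  exact hX.2.1 y (hlX y hy)

theorem IsSymmGen.wordLength_inv (hX : IsSymmGen X) (g : G) :
    wordLength X g⁻¹ = wordLength X g :=
  (hX.wordLength_inv_le g).antisymm (by simpa using hX.wordLength_inv_le g⁻¹)

theorem IsSymmGen.finite_wordLength_le (hX : IsSymmGen X) (n : ℕ) :
    {g : G | wordLength X g ≤ n}.Finite := by
  have hfin : {l : List G | l.length ≤ n ∧ ∀ x ∈ l, x ∈ X}.Finite := by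
    have := hX.1.to_subtype
    refine ((List.finite_length_le X n).image (List.map Subtype.val)).subset ?_
    rintro l ⟨hl, hlX⟩
    exact ⟨l.attach.map fun x => ⟨x.1, hlX x.1 x.2⟩, by simpa using hl, by
      simp [List.map_map, Function.comp_def]⟩
  refine (hfin.image List.prod).subset fun g hg => ?_
  obtain ⟨l, hl, hlX, hlg⟩ := hX.exists_list g
  exact ⟨l, ⟨hl.le.trans hg, hlX⟩, hlg⟩

theorem IsSymmGen.exists_wordLength_le (hX : IsSymmGen X) {Y : Set G} (hY : IsSymmGen Y) :
    ∃ c : ℕ, ∀ g : G, wordLength Y g ≤ c * wordLength X g := by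
  obtain ⟨c, hc⟩ := (hX.1.image (wordLength Y)).bddAbove
  refine ⟨c, fun g => ?_⟩
  obtain ⟨l, hl, hlX, rfl⟩ := hX.exists_list g
  rw [← hl]
  clear hl
  induction l with
  | nil => simp [wordLength_one]
  | cons x l ih =>
    rw [List.forall_mem_cons] at hlX
    have h1 := ih hlX.2
    have h2 : wordLength Y x ≤ c := hc ⟨x, hlX.1, rfl⟩
    have h3 := hY.wordLength_mul_le x l.prod
    rw [List.prod_cons, List.length_cons, mul_add, mul_one]
    omega

theorem IsSymmGen.exists_geodesic (hX : IsSymmGen X) (x y : G) :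
    ∃ f : ℕ → G, f 0 = x ∧ f (wordLength X (x⁻¹ * y)) = y ∧
      ∀ i j : ℕ, i ≤ j → j ≤ wordLength X (x⁻¹ * y) →
        wordLength X ((f i)⁻¹ * f j) = j - i := by
  obtain ⟨l, hl, hlX, hlg⟩ := hX.exists_list (x⁻¹ * y)
  refine ⟨fun i => x * (l.take i).prod, by simp, by simp [← hl, hlg], fun i j hij hj => ?_⟩
  rw [← hl] at hj
  have hsplit : (l.take i).prod * ((l.take j).drop i).prod = (l.take j).prod := by
    rw [← List.prod_append]
    have : l.take i = (l.take j).take i := by rw [List.take_take, min_eq_left hij]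
    rw [this, List.take_append_drop]
  have e : (x * (l.take i).prod)⁻¹ * (x * (l.take j).prod) = ((l.take j).drop i).prod := by
    rw [← hsplit]
    group
  rw [e]
  have hle : ∀ m : List G, (∀ y ∈ m, y ∈ l) → wordLength X m.prod ≤ m.length :=
    fun m hm => wordLength_list_prod_le fun y hy => hlX y (hm y hy)
  have h1 := hle ((l.take j).drop i) fun y hy => List.mem_of_mem_take (List.mem_of_mem_drop hy)
  have h2 := hle (l.take i) fun y hy => List.mem_of_mem_take hy
  have h3 := hle (l.drop j) fun y hy => List.mem_of_mem_drop hy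
  have h4 := hX.wordLength_mul_le (l.take j).prod (l.drop j).prod
  have h5 := hX.wordLength_mul_le (l.take i).prod ((l.take j).drop i).prod
  rw [hsplit] at h5
  rw [← List.prod_append, List.take_append_drop, hlg, ← hl] at h4
  simp only [List.length_drop, List.length_take] at h1 h2 h3
  omega

/-- The word metric as a pseudometric. -/
noncomputable abbrev IsSymmGen.wordPseudoMetric (hX : IsSymmGen X) : PseudoMetricSpace G where
  dist x y := wordDist X x y
  dist_self x := by simp [wordDist, wordLength_one]
  dist_comm x y := by
    rw [wordDist, ← hX.wordLength_inv]
    simp [wordDist]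
  dist_triangle x y z := by
    have := hX.wordLength_mul_le (x⁻¹ * y) (y⁻¹ * z)
    rw [mul_assoc, mul_inv_cancel_left] at this
    exact_mod_cast this

end WordMetric

/-- **Lemma 2.2(5).** For virtually cyclic subgroups with finite intersection, every
`c₁ ∈ C₁` becomes shortest in its `C₂`-coset after multiplying by a bounded element of
`C₂`. -/
theorem shortest_coset_rep_bounded_correction {G : Type u} [Group G]
    (hG : IsWordHyperbolic G) (X : Set G) (hX : IsSymmGen X)
    (C₁ C₂ : Subgroup G)
    (hvc₁ : IsVirtuallyCyclic ↥C₁) (hvc₂ : IsVirtuallyCyclic ↥C₂)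
    (hfin : ((C₁ ⊓ C₂ : Subgroup G) : Set G).Finite) :
    ∃ K₂ : ℝ, 0 < K₂ ∧
      ∀ c₁ ∈ C₁, ∃ c₂ ∈ C₂,
        (wordLength X c₂ : ℝ) ≤ K₂ ∧
        ShortestIn X (c₁ * c₂) {x | ∃ c ∈ C₂, x = c₁ * c} := by
  obtain ⟨Y, hY, δ', -, hδ'⟩ := hG
  let _ : PseudoMetricSpace G := hY.wordPseudoMetric
  have hdist : ∀ x y : G, dist x y = wordLength Y (x⁻¹ * y) := fun _ _ => rfl
  have : IsIsometricSMul G G := ⟨fun g => Isometry.of_dist_eq fun x y => by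
    rw [hdist, hdist, smul_eq_mul, smul_eq_mul, mul_inv_rev, mul_assoc, inv_mul_cancel_left]⟩
  have hgeo : DiscretelyGeodesic G := fun x y => by
    obtain ⟨f, hf0, hfn, hf⟩ := hY.exists_geodesic x y
    refine ⟨_, f, hf0, hfn, fun i j hij hj => ?_⟩
    rw [hdist, hf i j hij hj, Nat.cast_sub hij]
  have hball : ∀ r : ℝ, {g : G | dist 1 g ≤ r}.Finite := fun r => by
    refine (hY.finite_wordLength_le ⌊r⌋₊).subset fun g hg => ?_
    rw [Set.mem_ofPred_eq, hdist, inv_one, one_mul] at hg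
    exact Nat.le_floor hg
  have hhyp' : GromovHyperbolic G δ' := fun x y z w => hδ' x y z w
  obtain ⟨δ, hδ, hhyp⟩ : ∃ δ : ℝ, 1 ≤ δ ∧ GromovHyperbolic G δ :=
    ⟨max δ' 1, le_max_right _ _, hhyp'.mono (le_max_left _ _)⟩
  obtain ⟨R₁, hR₁⟩ := hhyp.quasiconvex_of_isVirtuallyCyclic hδ hgeo hball hvc₁
  obtain ⟨R₂, hR₂⟩ := hhyp.quasiconvex_of_isVirtuallyCyclic hδ hgeo hball hvc₂
  obtain ⟨D, hD⟩ := hhyp.exists_gromovProduct_le hgeo hball hR₁ hR₂ hfin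
  obtain ⟨a, ha⟩ := hX.exists_wordLength_le hY
  obtain ⟨b, hb⟩ := hY.exists_wordLength_le hX
  obtain ⟨B, hB⟩ := hhyp.exists_close_of_gromovProduct_le hδ hgeo
    (lam := a + b + 1) (by linarith [a.cast_nonneg (α := ℝ), b.cast_nonneg (α := ℝ)])
  refine ⟨2 * (b * |D + B|) + 1, by positivity, fun c₁ hc₁ => ?_⟩
  obtain ⟨c₂, hc₂, hmin⟩ : ∃ c₂ ∈ C₂, ∀ c ∈ C₂,
      wordLength X (c₁ * c₂) ≤ wordLength X (c₁ * c) := by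
    obtain ⟨c, hc⟩ := WellFounded.has_min (measure fun c : C₂ => wordLength X (c₁ * c)).wf
      Set.univ ⟨1, trivial⟩
    exact ⟨c, c.2, fun d hd => not_lt.1 (hc.2 ⟨d, hd⟩ trivial)⟩
  refine ⟨c₂, hc₂, ?_, ⟨c₂, hc₂, rfl⟩, ?_⟩
  swap
  · rintro _ ⟨c, hc, rfl⟩
    exact hmin c hc
  obtain ⟨f, hf0, hfn, hf⟩ := hX.exists_geodesic c₁⁻¹ c₂
  rw [inv_inv] at hfn hf
  set n := wordLength X (c₁ * c₂) with hn
  have hchain : IsQuasigeodesicChain ((a : ℝ) + b + 1) n f := by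
    refine ⟨fun i hi => ?_, fun i j hij hj => ?_⟩
    · have h1 := ha ((f i)⁻¹ * f (i + 1))
      rw [hf i (i + 1) (Nat.le_succ i) hi, Nat.add_sub_cancel_left, mul_one] at h1
      have h2 : (wordLength Y ((f i)⁻¹ * f (i + 1)) : ℝ) ≤ a := by exact_mod_cast h1
      rw [hdist]
      linarith [b.cast_nonneg (α := ℝ)]
    · have h1 := hb ((f i)⁻¹ * f j)
      rw [hf i j hij hj] at h1
      have h2 : ((j - i : ℕ) : ℝ) ≤ b * wordLength Y ((f i)⁻¹ * f j) := by exact_mod_cast h1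
      rw [Nat.cast_sub hij, ← hdist] at h2
      have h3 := dist_nonneg (x := f i) (y := f j)
      nlinarith [a.cast_nonneg (α := ℝ), b.cast_nonneg (α := ℝ)]
  obtain ⟨i, hi, hiB⟩ := hB n f hchain 1 D (by
    rw [hf0, hfn]
    exact hD _ (C₁.inv_mem hc₁) _ hc₂)
  have h1 : (wordLength X (f i) : ℝ) ≤ b * |D + B| := by
    have h2 : (wordLength X (f i) : ℝ) ≤ b * wordLength Y (f i) := by exact_mod_cast hb (f i)
    refine h2.trans (mul_le_mul_of_nonneg_left ?_ b.cast_nonneg)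
    rw [hdist, mul_one, hY.wordLength_inv] at hiB
    exact hiB.trans (le_abs_self _)
  have h2 := hf 0 i (Nat.zero_le _) hi
  have h3 := hf i n hi le_rfl
  rw [hf0, inv_inv] at h2
  rw [hfn] at h3
  have h4 := hX.wordLength_mul_le (c₁ * f i) (f i)⁻¹
  have h5 := hX.wordLength_mul_le (f i) ((f i)⁻¹ * c₂)
  have h6 := hmin 1 C₂.one_mem
  rw [mul_inv_cancel_right, hX.wordLength_inv] at h4
  rw [mul_inv_cancel_left] at h5
  rw [mul_one] at h6
  have h7 : wordLength X c₂ ≤ 2 * wordLength X (f i) := by omega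
  have h8 : (wordLength X c₂ : ℝ) ≤ 2 * wordLength X (f i) := by exact_mod_cast h7
  linarith
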